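/- Let p be a prime, let r be an integer, and let n be a nonnegative integer with (p−1) | n. Then for every integer b ≥ 2 one has F_p(n,r) ≡ F_p(n mod φ(p^b), r) (mod p^b) and F_p(n+p−2, r) ≡ F_p((n mod φ(p^b)) + p−2, r) (mod p^b), where φ is Euler's totient. Consequently, if moreover n > 0, then F_p(pn,r) + p·[p | r] − 1 ≡ 0 (mod p^{v+1}) where v is the p-adic valuation of pn. -/

import Mathlib

open Finset

/-- `x ≡ y (mod p^c)` for rationals: `x = y` or the `p`-adic valuation of `x - y`
is at least `c`. -/
def modCong (p : ℕ) (c : ℤ) (x y : ℚ) : Prop :=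
  x = y ∨ c ≤ padicValRat p (x - y)

/-- `C_p(n,r) = ∑_{0 ≤ k ≤ n, k ≡ r (mod p)} (-1)^k * binom(n,k)`. -/
def Cp (p n : ℕ) (r : ℤ) : ℚ :=
  ∑ k ∈ range (n+1), if ((k : ℤ) - r) % p = 0 then (-1 : ℚ)^k * (n.choose k) else 0

/-- The Fleck quotient `F_p(n,r) = (-p)^{-⌊(n-1)/(p-1)⌋} C_p(n,r) + [n = 0]`. -/
noncomputable def Fp (p n : ℕ) (r : ℤ) : ℚ :=
  (-(p:ℚ)) ^ (-(Int.fdiv ((n:ℤ) - 1) ((p:ℤ) - 1))) * Cp p n r + (if n = 0 then 1 else 0)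

/-!
In the integral group ring of the cyclic group of order `p` generated by `g`, the number `C_p(n,r)`
is the coefficient of `g ^ r` in `x ^ n`, where `x = 1 - g`. If `N = ∑ g ^ i` is the norm element,
then `x * N = 0` and `x ^ (p - 1) = N - p * u` for some `u = 1 + x * w`, so that
`x ^ p = -p * x * u`. Stripping off powers of `-p` turns Fleck quotients into coefficients:
`F_p((p-1)m + s, r)` is the coefficient of `g ^ r` in `x ^ s * u ^ m` for `0 < s < p`, and
`F_p((p-1)m, r)` is `1 - p * a` with `a` the coefficient of `g ^ r` in `u ^ m`.

Since `u ^ p ≡ 1 (mod p)`, the powers of `u` modulo `p ^ k` are periodic with period `p ^ k`, which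
gives the first congruence. For `s = p - 2` there is no factor `p` to spare; it is gained from
`p ^ 2 ∣ x ^ (p - 2) * (u ^ p - 1)`, which comes down to Fermat's little theorem for the
augmentation of `w`. The last congruence compares the indices `p * n` and `0`, as
`φ(p ^ (v + 1)) ∣ p * n`.
-/

open scoped Polynomial AddMonoidAlgebra

section PowerCongruences

variable {R : Type*} [CommRing R]

lemma natCast_pow_mul_sub_one_dvd_pow_sub_one {d : ℕ} {y : R} (h : (d : R) ∣ y - 1) (k : ℕ) :
    (d : R) ^ k * (y - 1) ∣ y ^ d ^ k - 1 := by
  induction k with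
  | zero => simp
  | succ k ih =>
    have hd : (d : R) ∣ y ^ d ^ k - 1 := h.trans (sub_one_dvd_pow_sub_one y _)
    have hsum : (d : R) ∣ ∑ i ∈ range d, (y ^ d ^ k) ^ i := by
      simpa using dvd_geom_sum₂_self hd
    rw [pow_succ' (d : R), mul_assoc, pow_succ d, pow_mul, ← geom_sum_mul]
    exact mul_dvd_mul hsum ih

lemma pow_sub_one_dvd_pow_sub_pow_of_modEq (u : R) {N m m' : ℕ} (h : m ≡ m' [MOD N]) :
    u ^ N - 1 ∣ u ^ m - u ^ m' := by
  wlog hle : m' ≤ m generalizing m m'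
  · rw [← dvd_neg, neg_sub]
    exact this h.symm (le_of_not_ge hle)
  have hfactor : u ^ m - u ^ m' = u ^ m' * (u ^ (m - m') - 1) := by
    rw [mul_sub, ← pow_add, Nat.add_sub_cancel' hle, mul_one]
  rw [hfactor]
  obtain ⟨q, hq⟩ := (Nat.modEq_iff_dvd' hle).1 h.symm
  rw [hq]
  exact (pow_one_sub_dvd_pow_mul_sub_one u N q).mul_left _

lemma prime_mul_sq_dvd_one_add_pow_sub {p : ℕ} (hp : p.Prime) (a : R) :
    (p : R) * a ^ 2 ∣ (1 + a) ^ p - (1 + p * a + a ^ p) := by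
  obtain ⟨q, rfl⟩ := Nat.exists_eq_add_of_le' hp.two_le
  have hexpand : (1 + a) ^ (q + 2) - (1 + (q + 2 : ℕ) * a + a ^ (q + 2)) =
      ∑ k ∈ range q, a ^ (k + 2) * ((q + 2).choose (k + 2) : R) := by
    rw [add_comm 1 a, add_pow, sum_range_succ, sum_range_succ', sum_range_succ']
    simp only [one_pow, mul_one, Nat.choose_self, Nat.choose_zero_right, Nat.choose_one_right,
      Nat.cast_one, zero_add, pow_zero, pow_one, add_assoc, one_add_one_eq_two]
    ring
  rw [hexpand]
  refine dvd_sum fun k hk => ?_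
  rw [mul_comm (_ : R) (a ^ 2)]
  have hk' := mem_range.1 hk
  exact mul_dvd_mul (pow_dvd_pow a (by omega))
    (Nat.cast_dvd_cast (hp.dvd_choose_self (by omega) (by omega)))

end PowerCongruences

/-- The relations that hold in `ℤ[ZMod p]`, for a suitable `w`, between `x = 1 - g` with `g` a
generator and the norm element `N = ∑ g ^ i`. Modulo `N`, that is in `ℤ[ζ_p]`, they say that
`1 + x * w` is the unit `(1 - ζ) ^ (p - 1) / (-p)`. -/
structure FleckRelation {R : Type*} [CommRing R] (p : ℕ) (x N w : R) : Prop where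
  mul_norm : x * N = 0
  pow_sub_one : x ^ (p - 1) = N - p * (1 + x * w)

namespace FleckRelation

variable {R : Type*} [CommRing R] {p : ℕ} {x N w : R}

lemma pow_eq (hp : p ≠ 0) (h : FleckRelation p x N w) : x ^ p = -p * x * (1 + x * w) := by
  rw [← mul_pow_sub_one hp, h.pow_sub_one, mul_sub, h.mul_norm]
  ring

lemma norm_mul_pow (h : FleckRelation p x N w) (m : ℕ) : N * (1 + x * w) ^ m = N := by
  induction m with
  | zero => simp
  | succ m ih =>
    rw [pow_succ]
    linear_combination (1 + x * w) * ih + w * h.mul_norm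

lemma pow_sub_one_mul_add (h : FleckRelation p x N w) (m : ℕ) {s : ℕ} (hs : s ≠ 0) :
    x ^ ((p - 1) * m + s) = (-p) ^ m * (x ^ s * (1 + x * w) ^ m) := by
  have hNs : x ^ s * N = 0 := by rw [← pow_sub_one_mul hs, mul_assoc, h.mul_norm, mul_zero]
  induction m with
  | zero => simp
  | succ m ih =>
    have hstep : x ^ s * x ^ (p - 1) = -p * (x ^ s * (1 + x * w)) := by
      rw [h.pow_sub_one, mul_sub, hNs]
      ring
    rw [mul_add_one, add_right_comm, pow_add, ih]
    linear_combination (-(p : R)) ^ m * (1 + x * w) ^ m * hstep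

lemma prime_dvd_pow_prime_sub_one (hp : p.Prime) (h : FleckRelation p x N w) :
    (p : R) ∣ (1 + x * w) ^ p - 1 := by
  obtain ⟨s, hs⟩ := prime_mul_sq_dvd_one_add_pow_sub hp (x * w)
  have hxp := h.pow_eq hp.ne_zero
  refine ⟨(x * w) ^ 2 * s + x * w - x * (1 + x * w) * w ^ p, ?_⟩
  rw [mul_pow x w p, hxp] at hs
  linear_combination hs

lemma prime_dvd_pow_sub_one_mul (hp : p.Prime) (h : FleckRelation p x N w) {c : ℤ}
    (hw : N * w = c * N) :
    (p : R) ∣ x ^ (p - 1) * (w - (1 + x * w) * w ^ p) := by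
  -- Multiplication by `N` turns `w` into `c`, so modulo `p` this is Fermat's `c ^ p ≡ c`.
  have := Fact.mk hp
  have hNw (k : ℕ) : N * w ^ k = c ^ k * N := by
    induction k with
    | zero => simp
    | succ k ih => rw [pow_succ, ← mul_assoc, ih, mul_assoc, hw, pow_succ, mul_assoc]
  have hfermat : (p : R) ∣ c - c ^ p := by
    have hc : (p : ℤ) ∣ c - c ^ p := (ZMod.intCast_zmod_eq_zero_iff_dvd _ p).1 (by simp)
    simpa using Int.cast_dvd_cast (α := R) _ _ hc
  have hsplit : x ^ (p - 1) * (w - (1 + x * w) * w ^ p) =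
      (c - c ^ p) * N - p * ((1 + x * w) * (w - (1 + x * w) * w ^ p)) := by
    rw [h.pow_sub_one]
    linear_combination hw - hNw p - w * w ^ p * h.mul_norm
  rw [hsplit]
  exact dvd_sub (hfermat.mul_right N) (dvd_mul_right _ _)

lemma prime_sq_dvd_pow_sub_two_mul (hp : p.Prime) (h : FleckRelation p x N w) {c : ℤ}
    (hw : N * w = c * N) :
    (p : R) ^ 2 ∣ x ^ (p - 2) * ((1 + x * w) ^ p - 1) := by
  obtain ⟨s, hs⟩ := prime_mul_sq_dvd_one_add_pow_sub hp (x * w)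
  obtain ⟨t, ht⟩ := h.prime_dvd_pow_sub_one_mul hp hw
  have hxp := h.pow_eq hp.ne_zero
  have hx1 : x ^ (p - 2) * x = x ^ (p - 1) := by
    rw [← pow_succ, show p - 2 + 1 = p - 1 by have := hp.two_le; omega]
  have hx2 : x ^ (p - 2) * x ^ 2 = x ^ p := by rw [← pow_add, Nat.sub_add_cancel hp.two_le]
  refine ⟨t - x * (1 + x * w) * w ^ 2 * s, ?_⟩
  rw [mul_pow x w p] at hs
  linear_combination x ^ (p - 2) * hs + p * ht + (x ^ (p - 2) * w ^ p + p * w ^ 2 * s) * hxp +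
    (p * w - p * (1 + x * w) * w ^ p) * hx1 + p * w ^ 2 * s * hx2

end FleckRelation

section IntegralMonoidRing

variable {G : Type*} [AddMonoid G]

lemma coeff_intCast_mul (a : ℤ) (y : ℤ[G]) (t : G) :
    ((a : ℤ[G]) * y).coeff t = a * y.coeff t := by
  rw [← zsmul_eq_mul, AddMonoidAlgebra.coeff_smul_apply, smul_eq_mul]

lemma dvd_coeff_of_intCast_dvd {a : ℤ} {y : ℤ[G]} (h : (a : ℤ[G]) ∣ y) (t : G) :
    a ∣ y.coeff t := by
  obtain ⟨z, rfl⟩ := h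
  exact ⟨z.coeff t, coeff_intCast_mul a z t⟩

end IntegralMonoidRing

section CyclicGroupRing

/-- The generator of the cyclic group of order `p`, in its integral group ring. The coefficient
of `(1 - cyclicGen p) ^ n` at the residue class of `r` is `C_p(n,r)`. -/
noncomputable def cyclicGen (p : ℕ) : ℤ[ZMod p] := AddMonoidAlgebra.single 1 1

/-- The norm element `1 + g + ⋯ + g ^ (p - 1)` of the integral group ring of the cyclic group of
order `p` generated by `g`. -/
noncomputable def cyclicNorm (p : ℕ) : ℤ[ZMod p] := ∑ i ∈ range p, cyclicGen p ^ i

variable {p : ℕ}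

lemma cyclicGen_pow (k : ℕ) : cyclicGen p ^ k = AddMonoidAlgebra.single (k : ZMod p) 1 := by
  rw [cyclicGen, AddMonoidAlgebra.single_pow, one_pow, nsmul_one]

lemma coeff_cyclicNorm (hp : p ≠ 0) (t : ZMod p) : (cyclicNorm p).coeff t = 1 := by
  obtain ⟨q, rfl⟩ := Nat.exists_eq_succ_of_ne_zero hp
  have hsum : cyclicNorm (q + 1) = ∑ a : ZMod (q + 1), AddMonoidAlgebra.single a 1 := by
    simp only [cyclicNorm, cyclicGen_pow, sum_range]
    exact Fintype.sum_congr _ _ fun i =>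
      congrArg (AddMonoidAlgebra.single · 1) (Fin.cast_val_eq_self i)
  rw [hsum, AddMonoidAlgebra.coeff_sum, Finsupp.finsetSum_apply]
  simp [Finsupp.single_apply]

lemma one_sub_cyclicGen_mul_cyclicNorm : (1 - cyclicGen p) * cyclicNorm p = 0 := by
  rw [cyclicNorm, mul_neg_geom_sum, cyclicGen_pow, CharP.cast_eq_zero,
    AddMonoidAlgebra.one_def, sub_self]

lemma cyclicNorm_mul_aeval_cyclicGen (f : ℤ[X]) :
    cyclicNorm p * Polynomial.aeval (cyclicGen p) f = (f.eval 1 : ℤ) * cyclicNorm p := by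
  obtain ⟨g, hg⟩ := Polynomial.X_sub_C_dvd_sub_C_eval (a := 1) (p := f)
  have hg' := congrArg (Polynomial.aeval (cyclicGen p)) hg
  simp only [map_sub, map_mul, Polynomial.aeval_X, eq_intCast, map_one, map_intCast] at hg'
  linear_combination
    cyclicNorm p * hg' - Polynomial.aeval (cyclicGen p) g * one_sub_cyclicGen_mul_cyclicNorm

lemma Cp_eq_coeff (p n : ℕ) (r : ℤ) : Cp p n r = (((1 - cyclicGen p) ^ n).coeff r : ℤ) := by
  have hexpand : (1 - cyclicGen p) ^ n = ∑ k ∈ range (n + 1),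
      (((-1) ^ k * n.choose k : ℤ) : ℤ[ZMod p]) * AddMonoidAlgebra.single (k : ZMod p) 1 := by
    rw [sub_eq_neg_add, add_pow]
    refine sum_congr rfl fun k _ => ?_
    rw [neg_pow, cyclicGen_pow]
    push_cast
    ring
  rw [hexpand, AddMonoidAlgebra.coeff_sum, Finsupp.finsetSum_apply, Cp, Int.cast_sum]
  refine sum_congr rfl fun k _ => ?_
  have hmod : ((k : ℤ) - r) % p = 0 ↔ (k : ZMod p) = r := by
    rw [← Int.dvd_iff_emod_eq_zero, ← ZMod.intCast_zmod_eq_zero_iff_dvd]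
    push_cast
    exact sub_eq_zero
  rw [coeff_intCast_mul, AddMonoidAlgebra.coeff_single, Finsupp.single_apply]
  simp only [hmod, mul_ite, mul_one, mul_zero, Int.cast_ite, Int.cast_zero]
  push_cast
  rfl

end CyclicGroupRing

section Cofactor

open Polynomial

lemma prime_dvd_geom_sum_sub_one_sub_X_pow {p : ℕ} (hp : p.Prime) :
    (p : ℤ[X]) ∣ ∑ i ∈ range p, X ^ i - (1 - X) ^ (p - 1) := by
  have := Fact.mk hp
  have hne : (1 - X : (ZMod p)[X]) ≠ 0 := by
    rw [← neg_ne_zero, neg_sub, ← C_1]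
    exact X_sub_C_ne_zero 1
  have hmod : ∑ i ∈ range p, X ^ i = (1 - X : (ZMod p)[X]) ^ (p - 1) :=
    mul_left_cancel₀ hne <| by
      rw [mul_neg_geom_sum, mul_pow_sub_one hp.ne_zero, sub_pow_char, one_pow]
  have hmap : (∑ i ∈ range p, X ^ i - (1 - X) ^ (p - 1) : ℤ[X]).map
      (Int.castRingHom (ZMod p)) = 0 := by
    simp [Polynomial.map_sum, hmod]
  rw [← C_eq_natCast]
  refine (C_dvd_iff_dvd_coeff _ _).2 fun i => (ZMod.intCast_zmod_eq_zero_iff_dvd _ p).1 ?_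
  rw [← eq_intCast (Int.castRingHom (ZMod p)), ← coeff_map, hmap, coeff_zero]

lemma exists_one_sub_X_pow_eq {p : ℕ} (hp : p.Prime) :
    ∃ W : ℤ[X], (1 - X : ℤ[X]) ^ (p - 1) =
      ∑ i ∈ range p, X ^ i - (p : ℤ[X]) * (1 + (1 - X) * W) := by
  obtain ⟨U, hU⟩ := prime_dvd_geom_sum_sub_one_sub_X_pow hp
  have hU1 : U.eval 1 = 1 := by
    have h := congrArg (eval 1) hU
    have hp0 : (p : ℤ) ≠ 0 := mod_cast hp.ne_zero
    simp only [eval_sub, eval_geom_sum, eval_pow, eval_one, eval_X, one_pow, sum_const, card_range,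
      nsmul_one, sub_self, zero_pow (Nat.sub_ne_zero_of_lt hp.one_lt), sub_zero, eval_mul,
      eval_natCast] at h
    exact (mul_eq_left₀ hp0).1 h.symm
  obtain ⟨V, hV⟩ := X_sub_C_dvd_sub_C_eval (a := 1) (p := U)
  rw [hU1, C_1] at hV
  refine ⟨-V, ?_⟩
  linear_combination -hU - (p : ℤ[X]) * hV

lemma exists_fleckRelation {p : ℕ} (hp : p.Prime) : ∃ (w : ℤ[ZMod p]) (c : ℤ),
    FleckRelation p (1 - cyclicGen p) (cyclicNorm p) w ∧ cyclicNorm p * w = c * cyclicNorm p := by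
  obtain ⟨W, hW⟩ := exists_one_sub_X_pow_eq hp
  refine ⟨aeval (cyclicGen p) W, W.eval 1, ⟨one_sub_cyclicGen_mul_cyclicNorm, ?_⟩,
    cyclicNorm_mul_aeval_cyclicGen W⟩
  simpa [cyclicNorm] using congrArg (aeval (cyclicGen p)) hW

end Cofactor

section FleckQuotient

variable {p : ℕ}

lemma modCong_iff_sub_zero {c : ℤ} {x y : ℚ} :
    modCong p c x y ↔ modCong p c (x - y) 0 := by
  rw [modCong, modCong, sub_eq_zero, sub_zero]

lemma modCong_intCast_iff_dvd (hp : p.Prime) {k : ℕ} {a b : ℤ} :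
    modCong p k a b ↔ (p : ℤ) ^ k ∣ a - b := by
  have := Fact.mk hp
  rw [modCong, padicValInt_dvd_iff, ← Int.cast_sub, padicValRat.of_int, Int.cast_inj,
    Nat.cast_le, sub_eq_zero]

lemma Fp_zero (hp : 2 ≤ p) (r : ℤ) :
    Fp p 0 r = 1 - (p : ℚ) * (if (p : ℤ) ∣ r then 1 else 0) := by
  have hfloor : Int.fdiv (((0 : ℕ) : ℤ) - 1) ((p : ℤ) - 1) = -1 := by
    rw [Int.fdiv_eq_ediv_of_nonneg _ (by omega), Int.ediv_eq_iff_of_pos (by omega)]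
    omega
  rw [Fp, hfloor, Cp]
  simp only [zero_add, sum_range_one, Nat.cast_zero, zero_sub, ← Int.dvd_iff_emod_eq_zero,
    dvd_neg, neg_neg, zpow_one, pow_zero, Nat.choose_self, Nat.cast_one, mul_one, if_true]
  ring

variable {w : ℤ[ZMod p]}

lemma Fp_sub_one_mul_add (h : FleckRelation p (1 - cyclicGen p) (cyclicNorm p) w) (r : ℤ)
    (m : ℕ) {s : ℕ} (hs : s ≠ 0) (hsp : s < p) :
    Fp p ((p - 1) * m + s) r =
      (((1 - cyclicGen p) ^ s * (1 + (1 - cyclicGen p) * w) ^ m).coeff r : ℤ) := by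
  have hfloor : Int.fdiv ((((p - 1) * m + s : ℕ) : ℤ) - 1) ((p : ℤ) - 1) = m := by
    rw [Int.fdiv_eq_ediv_of_nonneg _ (by omega), Int.ediv_eq_iff_of_pos (by omega)]
    push_cast [show 1 ≤ p by omega]
    have hs1 : (1 : ℤ) ≤ s := mod_cast Nat.one_le_iff_ne_zero.2 hs
    have hsp1 : (s : ℤ) < p := mod_cast hsp
    exact ⟨by linarith [hs1], by linarith [hsp1]⟩
  have hpm : (-(p : ℚ)) ^ m ≠ 0 := pow_ne_zero _ (neg_ne_zero.2 (mod_cast Nat.ne_zero_of_lt hsp))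
  have hcast : (-(p : ℤ[ZMod p])) ^ m = ((-(p : ℤ)) ^ m : ℤ) := by push_cast; rfl
  rw [Fp, hfloor, Cp_eq_coeff, h.pow_sub_one_mul_add m hs, hcast, coeff_intCast_mul,
    if_neg (by omega), add_zero, zpow_neg, zpow_natCast]
  push_cast
  rw [inv_mul_cancel_left₀ hpm]

lemma Fp_sub_one_mul (hp : 2 ≤ p)
    (h : FleckRelation p (1 - cyclicGen p) (cyclicNorm p) w) (r : ℤ) (m : ℕ) :
    Fp p ((p - 1) * m) r = (1 - p * ((1 + (1 - cyclicGen p) * w) ^ m).coeff r : ℤ) := by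
  cases m with
  | zero =>
    rw [mul_zero, Fp_zero hp, pow_zero, AddMonoidAlgebra.one_def, AddMonoidAlgebra.coeff_single,
      Finsupp.single_apply]
    simp only [eq_comm (a := (0 : ZMod p)), ZMod.intCast_zmod_eq_zero_iff_dvd]
    push_cast
    rfl
  | succ m =>
    set u := 1 + (1 - cyclicGen p) * w
    have hxu : (1 - cyclicGen p) ^ (p - 1) * u ^ m =
        cyclicNorm p - ((p : ℤ) : ℤ[ZMod p]) * u ^ (m + 1) := by
      rw [h.pow_sub_one, sub_mul, h.norm_mul_pow]
      push_cast
      ring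
    rw [mul_add_one, Fp_sub_one_mul_add h r m (by omega) (by omega), hxu,
      AddMonoidAlgebra.coeff_sub, Finsupp.sub_apply, coeff_cyclicNorm (by omega),
      coeff_intCast_mul]

lemma exists_eq_sub_one_mul_of_modEq_totient (hp : p.Prime) {k n n' : ℕ} (hn : p - 1 ∣ n)
    (h : n ≡ n' [MOD Nat.totient (p ^ (k + 1))]) :
    ∃ m m', n = (p - 1) * m ∧ n' = (p - 1) * m' ∧ m ≡ m' [MOD p ^ k] := by
  rw [Nat.totient_prime_pow_succ hp, mul_comm] at h
  obtain ⟨m, rfl⟩ := hn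
  obtain ⟨m', rfl⟩ := (h.of_mul_right _).dvd_iff dvd_rfl |>.1 (dvd_mul_right _ m)
  exact ⟨m, m', rfl, rfl, h.mul_left_cancel' (Nat.sub_ne_zero_of_lt hp.one_lt)⟩

theorem modCong_Fp_of_modEq_totient (hp : p.Prime) {k n n' : ℕ} (hn : p - 1 ∣ n)
    (h : n ≡ n' [MOD Nat.totient (p ^ (k + 1))]) (r : ℤ) :
    modCong p (k + 1 : ℕ) (Fp p n r) (Fp p n' r) := by
  obtain ⟨m, m', rfl, rfl, hm⟩ := exists_eq_sub_one_mul_of_modEq_totient hp hn h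
  obtain ⟨w, -, hw, -⟩ := exists_fleckRelation hp
  set u := 1 + (1 - cyclicGen p) * w
  have hpow : (p : ℤ[ZMod p]) ^ k ∣ u ^ p ^ k - 1 := by
    cases k with
    | zero => simp
    | succ k =>
      have hu := hw.prime_dvd_pow_prime_sub_one hp
      rw [pow_succ, pow_succ' p, pow_mul]
      exact (mul_dvd_mul_left _ hu).trans (natCast_pow_mul_sub_one_dvd_pow_sub_one hu k)
  have hdvd := hpow.trans (pow_sub_one_dvd_pow_sub_pow_of_modEq u hm.symm)
  have hcoeff := dvd_coeff_of_intCast_dvd (a := (p : ℤ) ^ k) (mod_cast hdvd) (r : ZMod p)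
  rw [AddMonoidAlgebra.coeff_sub, Finsupp.sub_apply] at hcoeff
  rw [Fp_sub_one_mul hp.two_le hw, Fp_sub_one_mul hp.two_le hw, modCong_intCast_iff_dvd hp,
    pow_succ', sub_sub_sub_cancel_left, ← mul_sub]
  exact mul_dvd_mul_left _ hcoeff

theorem modCong_Fp_add_sub_two_of_modEq_totient (hp : p.Prime) {k n n' : ℕ} (hn : p - 1 ∣ n)
    (h : n ≡ n' [MOD Nat.totient (p ^ (k + 2))]) (r : ℤ) :
    modCong p (k + 2 : ℕ) (Fp p (n + p - 2) r) (Fp p (n' + p - 2) r) := by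
  rcases hp.eq_two_or_odd with rfl | hodd
  · exact modCong_Fp_of_modEq_totient hp hn h r
  obtain ⟨m, m', rfl, rfl, hm⟩ := exists_eq_sub_one_mul_of_modEq_totient hp hn h
  obtain ⟨w, c, hw, hc⟩ := exists_fleckRelation hp
  have hs : p - 2 ≠ 0 := by have := hp.two_le; omega
  have hsp : p - 2 < p := by omega
  set u := 1 + (1 - cyclicGen p) * w
  have hpow : (p : ℤ[ZMod p]) ^ (k + 2) ∣ (1 - cyclicGen p) ^ (p - 2) * (u ^ p ^ (k + 1) - 1) := by
    have hu := natCast_pow_mul_sub_one_dvd_pow_sub_one (hw.prime_dvd_pow_prime_sub_one hp) k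
    rw [← pow_mul, ← pow_succ'] at hu
    rw [pow_add]
    calc (p : ℤ[ZMod p]) ^ k * p ^ 2
        ∣ p ^ k * ((1 - cyclicGen p) ^ (p - 2) * (u ^ p - 1)) :=
          mul_dvd_mul_left _ (hw.prime_sq_dvd_pow_sub_two_mul hp hc)
      _ = (1 - cyclicGen p) ^ (p - 2) * (p ^ k * (u ^ p - 1)) := mul_left_comm _ _ _
      _ ∣ (1 - cyclicGen p) ^ (p - 2) * (u ^ p ^ (k + 1) - 1) := mul_dvd_mul_left _ hu
  have hdvd := hpow.trans (mul_dvd_mul_left _ (pow_sub_one_dvd_pow_sub_pow_of_modEq u hm))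
  have hcoeff := dvd_coeff_of_intCast_dvd (a := (p : ℤ) ^ (k + 2)) (mod_cast hdvd) (r : ZMod p)
  rw [mul_sub, AddMonoidAlgebra.coeff_sub, Finsupp.sub_apply] at hcoeff
  rw [Nat.add_sub_assoc hp.two_le, Nat.add_sub_assoc hp.two_le, Fp_sub_one_mul_add hw r m hs hsp,
    Fp_sub_one_mul_add hw r m' hs hsp, modCong_intCast_iff_dvd hp]
  exact hcoeff

end FleckQuotient

theorem stmt3 (p : ℕ) (hp : p.Prime) (r : ℤ) (n : ℕ) (hdvd : (p - 1) ∣ n) :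
    (∀ b : ℕ, 2 ≤ b →
      modCong p b (Fp p n r) (Fp p (n % Nat.totient (p^b)) r) ∧
      modCong p b (Fp p (n + p - 2) r) (Fp p (n % Nat.totient (p^b) + p - 2) r)) ∧
    (0 < n → modCong p ((padicValNat p (p*n) : ℤ) + 1)
      (Fp p (p*n) r + (p:ℚ) * (if (p:ℤ) ∣ r then 1 else 0) - 1) 0) := by
  refine ⟨fun b hb => ?_, fun _ => ?_⟩
  · obtain ⟨k, rfl⟩ := Nat.exists_eq_add_of_le' hb
    have hmod : n ≡ n % Nat.totient (p ^ (k + 2)) [MOD Nat.totient (p ^ (k + 2))] :=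
      (Nat.mod_modEq n _).symm
    exact ⟨modCong_Fp_of_modEq_totient hp hdvd hmod r,
      modCong_Fp_add_sub_two_of_modEq_totient hp hdvd hmod r⟩
  · have hdvd' : p - 1 ∣ p * n := hdvd.mul_left p
    have htotient : Nat.totient (p ^ (padicValNat p (p * n) + 1)) ∣ p * n := by
      rw [Nat.totient_prime_pow_succ hp]
      exact Nat.Coprime.mul_dvd_of_dvd_of_dvd
        ((Nat.coprime_self_sub_right hp.one_le).2 (Nat.coprime_one_right p) |>.pow_left _)
        pow_padicValNat_dvd hdvd'
    have h := modCong_Fp_of_modEq_totient hp hdvd' (Nat.modEq_zero_iff_dvd.2 htotient) r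
    rw [Fp_zero hp.two_le, modCong_iff_sub_zero, sub_sub_eq_add_sub] at h
    exact_mod_cast h
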